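/- arXiv:1808.01842 — 4 statements merged into one kernel-verified Lean document; each statement's English description precedes it below -/
import Mathlib

section
/- Let f : Finset E → ℝ be non-negative, monotone, submodular, let O be a finset with f(O) = OPT, let S be a finset, and let τ ≥ 0. If f(o|S) ≤ τ for every o ∈ O, then f(S) ≥ OPT − |O|·τ. -/
/-!
Reach `S ∪ O` from `S` by inserting the elements of `O` one at a time. By submodularity no
insertion gains more than the same element would gain on top of `S` alone, so the gains add up to
at most `|O| · τ`; by monotonicity `f O ≤ f (S ∪ O)`.
-/

open Finset

section

variable {E α : Type*} [DecidableEq E]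

/-- The marginal gain `f(e|S)` of an element `e` with respect to a finset `S`; it is `0` when
`e ∈ S`. -/
def marginalGain [Sub α] (f : Finset E → α) (S : Finset E) (e : E) : α :=
  f (insert e S) - f S

/-- Submodularity of a set function, in its diminishing-returns form. The new element is only
required to lie outside the larger set, so that monotonicity does not follow. -/
def IsSubmodular [Sub α] [LE α] (f : Finset E → α) : Prop :=
  ∀ ⦃X Y : Finset E⦄, X ⊆ Y → ∀ ⦃e : E⦄, e ∉ Y → marginalGain f Y e ≤ marginalGain f X e

theorem add_marginalGain [AddCommGroup α] (f : Finset E → α) (S : Finset E) (e : E) :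
    f S + marginalGain f S e = f (insert e S) :=
  add_sub_cancel (f S) (f (insert e S))

theorem marginalGain_of_mem [AddGroup α] (f : Finset E → α) {S : Finset E} {e : E} (he : e ∈ S) :
    marginalGain f S e = 0 := by
  rw [marginalGain, insert_eq_of_mem he, sub_self]

namespace IsSubmodular

theorem marginalGain_union_le [AddGroup α] [Preorder α] {f : Finset E → α} (hf : IsSubmodular f)
    (S : Finset E) {T : Finset E} {e : E} (he : e ∉ T) :
    marginalGain f (S ∪ T) e ≤ marginalGain f S e := by
  by_cases heS : e ∈ S
  · rw [marginalGain_of_mem f heS, marginalGain_of_mem f (mem_union_left T heS)]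
  · exact hf subset_union_left (notMem_union.2 ⟨heS, he⟩)

theorem apply_union_le_add_sum_marginalGain [AddCommGroup α] [Preorder α]
    [IsOrderedAddMonoid α] {f : Finset E → α} (hf : IsSubmodular f) (S T : Finset E) :
    f (S ∪ T) ≤ f S + ∑ e ∈ T, marginalGain f S e := by
  induction T using Finset.induction_on with
  | empty => simp
  | insert e T he ih =>
    calc f (S ∪ insert e T)
        = f (S ∪ T) + marginalGain f (S ∪ T) e := by rw [union_insert, add_marginalGain]
      _ ≤ (f S + ∑ x ∈ T, marginalGain f S x) + marginalGain f S e :=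
          add_le_add ih (hf.marginalGain_union_le S he)
      _ = f S + ∑ x ∈ insert e T, marginalGain f S x := by
          rw [sum_insert he, add_assoc, add_comm (marginalGain f S e)]

end IsSubmodular

theorem stmt_0_general [AddCommGroup α] [Preorder α] [IsOrderedAddMonoid α]
    {f : Finset E → α} (hmono : Monotone f) (hsubmod : IsSubmodular f) {O S : Finset E} {τ : α}
    (hthr : ∀ o ∈ O, marginalGain f S o ≤ τ) :
    f O - #O • τ ≤ f S :=
  sub_le_iff_le_add.2 <|
    calc f O ≤ f (S ∪ O) := hmono subset_union_right
      _ ≤ f S + ∑ o ∈ O, marginalGain f S o := hsubmod.apply_union_le_add_sum_marginalGain S O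
      _ ≤ f S + #O • τ := by gcongr; exact sum_le_card_nsmul O _ τ hthr

end

/-- Threshold argument: if every element of `O` has marginal gain at most `τ`
with respect to `S`, then `f S ≥ OPT - |O| · τ`. -/
theorem stmt_0 {E : Type*} [DecidableEq E]
    (f : Finset E → ℝ)
    (hnonneg : ∀ X : Finset E, 0 ≤ f X)
    (hmono : ∀ X Y : Finset E, X ⊆ Y → f X ≤ f Y)
    (hsubmod : ∀ X Y : Finset E, X ⊆ Y → ∀ e ∉ Y,
      f (insert e Y) - f Y ≤ f (insert e X) - f X)
    (O S : Finset E) (OPT τ : ℝ)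
    (hOPT : f O = OPT) (hτ : 0 ≤ τ)
    (hthr : ∀ o ∈ O, f (insert o S) - f S ≤ τ) :
    f S ≥ OPT - (O.card : ℝ) * τ := by
  rw [← hOPT, ← nsmul_eq_mul]
  exact stmt_0_general (fun X Y => hmono X Y) (fun X Y => hsubmod X Y) hthr
end

section
/- Let k ≥ 1 be an integer, let f : Finset E → ℝ be normalized (f(∅) = 0) and OPT ≥ 0, and let e₁, …, e_k be distinct elements such that for every 1 ≤ i ≤ k, f(e_i | {e₁, …, e_{i−1}}) ≥ (OPT − f({e₁, …, e_{i−1}}))/k. Then for every 0 ≤ i ≤ k, OPT − f({e₁, …, e_i}) ≤ ((k−1)/k)^i · OPT. -/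
/-!
Write `S i` for the set of the first `i` elements. The threshold condition says that adding the
next element lowers the gap `OPT - f (S i)` by at least a `1 / k` fraction of itself, so the gap
contracts by the factor `(k - 1) / k ≥ 0` at each step, starting from `OPT - f ∅`.
-/

open Finset

theorem le_pow_mul_of_forall_lt_le_mul {M : Type*} [MonoidWithZero M] [Preorder M]
    [PosMulMono M] {u : ℕ → M} {r : M} {n : ℕ} (hr : 0 ≤ r) (h : ∀ i < n, u (i + 1) ≤ r * u i) :
    u n ≤ r ^ n * u 0 := by
  have pow_mul_succ : ∀ i < n, r * (r ^ i * u 0) ≤ r ^ (i + 1) * u 0 := fun i _ ↦ by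
    rw [pow_succ', mul_assoc]
  have init_le : u 0 ≤ r ^ 0 * u 0 := by rw [pow_zero, one_mul]
  exact (monotone_mul_left_of_nonneg hr).seq_le_seq (y := fun i ↦ r ^ i * u 0) n
    init_le h pow_mul_succ

section OrderedField

variable {K : Type*} [Field K] [LinearOrder K] [IsStrictOrderedRing K]

theorem sub_le_mul_sub_of_div_le_sub {a b c t : K} (hc : c ≠ 0) (h : (t - a) / c ≤ b - a) :
    t - b ≤ (c - 1) / c * (t - a) := by
  calc
    t - b = (t - a) - (b - a) := by ring
    _ ≤ (t - a) - (t - a) / c := by gcongr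
    _ = (c - 1) / c * (t - a) := by field_simp

theorem sub_le_pow_mul_sub_of_div_le_sub {u : ℕ → K} {c t : K} {n : ℕ} (hc : 1 ≤ c)
    (h : ∀ i < n, (t - u i) / c ≤ u (i + 1) - u i) :
    t - u n ≤ ((c - 1) / c) ^ n * (t - u 0) := by
  have c_pos : 0 < c := zero_lt_one.trans_le hc
  have ratio_nonneg : 0 ≤ (c - 1) / c := div_nonneg (sub_nonneg.2 hc) c_pos.le
  exact le_pow_mul_of_forall_lt_le_mul (u := fun i ↦ t - u i) ratio_nonneg fun i hi ↦
    sub_le_mul_sub_of_div_le_sub c_pos.ne' (h i hi)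

theorem stmt_6_general {E : Type*} [DecidableEq E] {f : Finset E → K} {e : ℕ → E} {c t : K} {n : ℕ}
    (hc : 1 ≤ c)
    (hthr : ∀ i < n, (t - f ((range i).image e)) / c ≤
      f (insert (e i) ((range i).image e)) - f ((range i).image e)) :
    t - f ((range n).image e) ≤ ((c - 1) / c) ^ n * (t - f ∅) := by
  have gap_div_le_gain : ∀ i < n, (t - f ((range i).image e)) / c ≤
      f ((range (i + 1)).image e) - f ((range i).image e) := by
    simpa only [range_add_one, image_insert] using hthr
  exact sub_le_pow_mul_sub_of_div_le_sub (u := fun i ↦ f ((range i).image e)) hc gap_div_le_gain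

end OrderedField

/-- Core inductive inequality of the small-k adaptive-threshold analysis. -/
theorem stmt_6 {E : Type*} [DecidableEq E]
    (k : ℕ) (hk : 1 ≤ k)
    (f : Finset E → ℝ)
    (hnorm : f ∅ = 0)
    (OPT : ℝ) (hOPT : 0 ≤ OPT)
    (e : ℕ → E) (hinj : Set.InjOn e (Set.Iio k))
    (hthr : ∀ i < k,
      f (insert (e i) ((Finset.range i).image e)) - f ((Finset.range i).image e) ≥
        (OPT - f ((Finset.range i).image e)) / k) :
    ∀ i ≤ k, OPT - f ((Finset.range i).image e) ≤ (((k : ℝ) - 1) / k) ^ i * OPT := by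
  intro i hi
  simpa only [hnorm, sub_zero] using
    stmt_6_general (Nat.one_le_cast.2 hk) fun j hj ↦ hthr j (hj.trans_le hi)
end

section
/- Let E be a type, let U, V : Finset E be disjoint finsets, let w ∈ E with w ∉ U and w ∉ V, and let k be a natural number. Define f : Finset E → ℝ by f(S) = |U ∩ S| + (k if w ∈ S, and min(k, |V ∩ S|) otherwise). Then f is normalized (f(∅) = 0), monotone, and submodular. -/
open Finset

/-- The hard-instance function from the INDEX reduction. -/
noncomputable def hardFn {E : Type*} [DecidableEq E]
    (U V : Finset E) (w : E) (k : ℕ) (S : Finset E) : ℝ :=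
  ((U ∩ S).card : ℝ) + (if w ∈ S then (k : ℝ) else min (k : ℝ) ((V ∩ S).card))

/-!
The second summand of `hardFn` is `min k (|V ∩ S| + k * [w ∈ S])`: giving `w` the weight `k`
already saturates the minimum. So the function is a nonnegative modular function plus the
truncation at `k` of another one, and truncating a monotone submodular function preserves
submodularity because `min k` is monotone and concave.
-/

/-- A polymatroid function: a normalized, monotone and submodular set function, bundled so that
closure under sums and truncations is stated for all three properties at once. Submodularity is
encoded as diminishing marginals. -/
structure IsPolymatroidFn {E M : Type*} [DecidableEq E] [AddGroup M] [Preorder M]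
    (f : Finset E → M) : Prop where
  map_empty : f ∅ = 0
  monotone : Monotone f
  insert_sub_le : ∀ ⦃X Y : Finset E⦄, X ⊆ Y → ∀ e ∉ Y,
    f (insert e Y) - f Y ≤ f (insert e X) - f X

lemma ite_min_eq_min_add_ite {M : Type*} [AddCommMonoid M] [LinearOrder M]
    [IsOrderedAddMonoid M] {x : M} (p : Prop) [Decidable p] (k : M) (hx : 0 ≤ x) :
    (if p then k else min k x) = min k (x + if p then k else 0) := by
  split_ifs
  · exact (min_eq_left (le_add_of_nonneg_left hx)).symm
  · rw [add_zero]

lemma min_sub_min_le_min_sub_min {M : Type*} [AddCommGroup M] [LinearOrder M]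
    [IsOrderedAddMonoid M] {a b c d : M} (k : M)
    (hab : a ≤ b) (hac : a ≤ c) (h : d - c ≤ b - a) : min k d - min k c ≤ min k b - min k a := by
  rcases le_total k c with hkc | hck
  · calc
      min k d - min k c ≤ 0 := by
        rw [min_eq_left hkc]
        exact sub_nonpos.2 (min_le_left k d)
      _ ≤ min k b - min k a := sub_nonneg.2 (min_le_min_left k hab)
  · rw [min_eq_right hck, min_eq_right (hac.trans hck), ← min_sub_sub_right,
      ← min_sub_sub_right]
    exact min_le_min (sub_le_sub_left hac k) h

namespace IsPolymatroidFn

variable {E M : Type*} [DecidableEq E] [AddCommGroup M]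

section Preorder

variable [Preorder M] {f g : Finset E → M}

lemma nonneg (hf : IsPolymatroidFn f) (S : Finset E) : 0 ≤ f S :=
  hf.map_empty.ge.trans (hf.monotone S.empty_subset)

variable [IsOrderedAddMonoid M]

lemma add (hf : IsPolymatroidFn f) (hg : IsPolymatroidFn g) :
    IsPolymatroidFn fun S ↦ f S + g S where
  map_empty := by rw [hf.map_empty, hg.map_empty, add_zero]
  monotone := hf.monotone.add hg.monotone
  insert_sub_le X Y hXY e he := by
    simpa only [add_sub_add_comm] using
      add_le_add (hf.insert_sub_le hXY e he) (hg.insert_sub_le hXY e he)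

lemma sum_weights {c : E → M} (hc : ∀ e, 0 ≤ c e) : IsPolymatroidFn fun S ↦ ∑ e ∈ S, c e where
  map_empty := sum_empty
  monotone := sum_mono_set_of_nonneg hc
  insert_sub_le X Y hXY e he := by
    rw [sum_insert he, sum_insert (notMem_mono hXY he), add_sub_cancel_right,
      add_sub_cancel_right]

lemma ite_mem (w : E) {k : M} (hk : 0 ≤ k) :
    IsPolymatroidFn fun S ↦ if w ∈ S then k else 0 := by
  have weight_nonneg (e : E) : 0 ≤ if e = w then k else 0 := by split_ifs <;> simp [hk]
  simpa only [sum_ite_eq'] using sum_weights weight_nonneg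

end Preorder

section LinearOrder

variable [LinearOrder M] [IsOrderedAddMonoid M] {g : Finset E → M}

lemma const_min (hg : IsPolymatroidFn g) {k : M} (hk : 0 ≤ k) :
    IsPolymatroidFn fun S ↦ min k (g S) where
  map_empty := by rw [hg.map_empty, min_eq_right hk]
  monotone _ _ hXY := min_le_min_left k (hg.monotone hXY)
  insert_sub_le X _ hXY e he :=
    min_sub_min_le_min_sub_min k (hg.monotone (subset_insert e X)) (hg.monotone hXY)
      (hg.insert_sub_le hXY e he)

lemma ite_mem_const_min (hg : IsPolymatroidFn g) (w : E) {k : M} (hk : 0 ≤ k) :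
    IsPolymatroidFn fun S ↦ if w ∈ S then k else min k (g S) := by
  simpa only [ite_min_eq_min_add_ite _ k (hg.nonneg _)] using (hg.add (ite_mem w hk)).const_min hk

end LinearOrder

lemma card_inter {R : Type*} [Ring R] [PartialOrder R] [IsOrderedRing R] (A : Finset E) :
    IsPolymatroidFn fun S ↦ ((A ∩ S).card : R) := by
  have weight_nonneg (e : E) : (0 : R) ≤ if e ∈ A then 1 else 0 := by split_ifs <;> simp
  simpa only [sum_boole, filter_mem_eq_inter, inter_comm] using sum_weights weight_nonneg

end IsPolymatroidFn

theorem stmt_14_general {E : Type*} [DecidableEq E] (U V : Finset E) (w : E) (k : ℕ) :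
    IsPolymatroidFn (hardFn U V w k) :=
  (IsPolymatroidFn.card_inter U).add
    ((IsPolymatroidFn.card_inter V).ite_mem_const_min w k.cast_nonneg)

/-- The hard-instance function is normalized, monotone and submodular. -/
theorem stmt_14 {E : Type*} [DecidableEq E]
    (U V : Finset E) (hUV : Disjoint U V)
    (w : E) (hwU : w ∉ U) (hwV : w ∉ V) (k : ℕ) :
    hardFn U V w k (∅ : Finset E) = 0 ∧
    (∀ X Y : Finset E, X ⊆ Y → hardFn U V w k X ≤ hardFn U V w k Y) ∧
    (∀ X Y : Finset E, X ⊆ Y → ∀ e ∉ Y,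
      hardFn U V w k (insert e Y) - hardFn U V w k Y ≤
        hardFn U V w k (insert e X) - hardFn U V w k X) :=
  have h := stmt_14_general U V w k
  ⟨h.map_empty, fun _ _ hXY ↦ h.monotone hXY, h.insert_sub_le⟩
end

section
/- Let E be a type, let U, V : Finset E be disjoint finsets, let w ∈ E with w ∉ U and w ∉ V, let k ≥ 1 be a natural number with |U| ≥ k − 1, and define f : Finset E → ℝ by f(S) = |U ∩ S| + (k if w ∈ S, and min(k, |V ∩ S|) otherwise). Then: (a) f(S) ≤ 2k − 1 for every finset S with |S| ≤ k, and there exists a finset S with |S| ≤ k, S ⊆ U ∪ V ∪ {w}, and f(S) = 2k − 1; and (b) f(S) ≤ k for every finset S ⊆ V ∪ {w} with |S| ≤ k. -/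
/-!
For `k ≥ 1`, every finite set satisfies `f(S) ≤ |S| + k - 1`. If `w ∈ S`, then `w` occupies a place
of `S` outside `U`, so the first summand is at most `|S| - 1`, while the second is `k`. If `w ∉ S`,
then `f(S) ≤ |U ∩ S| + |V ∩ S| ≤ |S|` because `U` and `V` are disjoint. With `|S| ≤ k` this is the
bound `2k - 1`, attained by `w` together with `k - 1` elements of `U`. A set disjoint from `U` only
has the second summand, which never exceeds `k`.
-/

open Finset

section

variable {E : Type*} [DecidableEq E] {U V S T : Finset E} {w : E} {k : ℕ}

theorem card_inter_lt_card_of_mem_of_notMem (hwS : w ∈ S) (hwU : w ∉ U) : #(U ∩ S) < #S :=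
  card_lt_card <| inter_subset_right.ssubset_of_mem_notMem hwS fun h => hwU (mem_inter.mp h).1

theorem card_inter_add_card_inter_le_card (hUV : Disjoint U V) : #(U ∩ S) + #(V ∩ S) ≤ #S := by
  rw [← card_union_of_disjoint (hUV.mono inter_subset_left inter_subset_left)]
  exact card_le_card (union_subset inter_subset_right inter_subset_right)

theorem hardFn_of_mem (hwS : w ∈ S) : hardFn U V w k S = #(U ∩ S) + k := by
  rw [hardFn, if_pos hwS]

theorem hardFn_of_notMem (hwS : w ∉ S) :
    hardFn U V w k S = #(U ∩ S) + min (k : ℝ) #(V ∩ S) := by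
  rw [hardFn, if_neg hwS]

theorem hardFn_le_card_inter_add : hardFn U V w k S ≤ #(U ∩ S) + k := by
  by_cases hwS : w ∈ S
  · exact (hardFn_of_mem hwS).le
  · rw [hardFn_of_notMem hwS]
    gcongr
    exact min_le_left _ _

theorem hardFn_le_of_disjoint (hUS : Disjoint U S) : hardFn U V w k S ≤ k :=
  calc
    hardFn U V w k S ≤ #(U ∩ S) + k := hardFn_le_card_inter_add
    _ = k := by rw [disjoint_iff_inter_eq_empty.mp hUS, card_empty, Nat.cast_zero, zero_add]

theorem hardFn_le_card_of_notMem (hUV : Disjoint U V) (hwS : w ∉ S) : hardFn U V w k S ≤ #S :=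
  calc
    hardFn U V w k S = #(U ∩ S) + min (k : ℝ) #(V ∩ S) := hardFn_of_notMem hwS
    _ ≤ #(U ∩ S) + #(V ∩ S) := by gcongr; exact min_le_right _ _
    _ ≤ #S := mod_cast card_inter_add_card_inter_le_card hUV

theorem hardFn_le_card_add_sub_one (hUV : Disjoint U V) (hwU : w ∉ U) (hk : 1 ≤ k) :
    hardFn U V w k S ≤ #S + k - 1 := by
  by_cases hwS : w ∈ S
  · have hcard : (#(U ∩ S) : ℝ) + 1 ≤ #S := mod_cast card_inter_lt_card_of_mem_of_notMem hwS hwU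
    rw [hardFn_of_mem hwS]
    linarith
  · have hvalue : hardFn U V w k S ≤ #S := hardFn_le_card_of_notMem hUV hwS
    have hk' : (1 : ℝ) ≤ k := mod_cast hk
    linarith

theorem hardFn_insert_of_subset (hwU : w ∉ U) (hTU : T ⊆ U) :
    hardFn U V w k (insert w T) = #T + k := by
  rw [hardFn_of_mem (mem_insert_self w T), inter_insert_of_notMem hwU, inter_eq_right.mpr hTU]

end

/-- Computation of the optimum value of the hard instance. -/
theorem stmt_15 {E : Type*} [DecidableEq E]
    (U V : Finset E) (hUV : Disjoint U V)
    (w : E) (hwU : w ∉ U) (hwV : w ∉ V)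
    (k : ℕ) (hk : 1 ≤ k) (hU : k - 1 ≤ U.card) :
    ((∀ S : Finset E, S.card ≤ k → hardFn U V w k S ≤ 2 * (k : ℝ) - 1) ∧
      (∃ S : Finset E, S.card ≤ k ∧ S ⊆ U ∪ V ∪ {w} ∧
        hardFn U V w k S = 2 * (k : ℝ) - 1)) ∧
    (∀ S : Finset E, S ⊆ V ∪ {w} → S.card ≤ k → hardFn U V w k S ≤ (k : ℝ)) := by
  refine ⟨⟨fun S hS => ?_, ?_⟩, fun S hSV _ => ?_⟩
  · have hS' : (#S : ℝ) ≤ k := mod_cast hS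
    linarith [hardFn_le_card_add_sub_one (S := S) hUV hwU hk]
  · obtain ⟨T, hTU, hT⟩ := exists_subset_card_eq hU
    refine ⟨insert w T, ?_, ?_, ?_⟩
    · have hcard : #(insert w T) ≤ #T + 1 := card_insert_le w T
      omega
    · exact insert_subset (mem_union_right _ (mem_singleton_self w))
        (hTU.trans (subset_union_left.trans subset_union_left))
    · rw [hardFn_insert_of_subset hwU hTU, hT, Nat.cast_pred hk]
      ring
  · have hU_disj : Disjoint U (V ∪ {w}) :=
      disjoint_union_right.mpr ⟨hUV, disjoint_singleton_right.mpr hwU⟩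
    exact hardFn_le_of_disjoint (hU_disj.mono_right hSV)
end
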